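/- Let E be an equivalence relation on ℕ such that E × id is computably reducible to E. Suppose Q ⊆ ℕ, e₀ ∈ ℕ, and h : ℕ → ℕ is total computable with: for all n, Q(n) ⟺ h(n) E⁺ e₀, and h(n) ⊆_E e₀ for all n. Define P ⊆ ℕ by P(n) ⟺ ∀p ∃q Q(⟨p,q,n⟩). Then there exist f₀ ∈ ℕ and a total computable g : ℕ → ℕ such that for all n: P(n) ⟺ g(n) E⁺⁺⁺ f₀, and g(n) ⊆_{E⁺⁺} f₀ for all n. -/

import Mathlib

/-- The `e`-th partial computable function. -/
def phi (e : ℕ) : ℕ →. ℕ :=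
  Nat.Partrec.Code.eval (Denumerable.ofNat Nat.Partrec.Code e)

/-- `W_e`, the `e`-th c.e. set: the domain of `φ_e`. -/
def WSet (e : ℕ) : Set ℕ := (phi e).Dom

/-- The `E`-equivalence class of `k`. -/
def classOf (E : ℕ → ℕ → Prop) (k : ℕ) : Set ℕ := {x | E k x}

/-- Computable reducibility of binary relations on ℕ. -/
def Reduces (E F : ℕ → ℕ → Prop) : Prop :=
  ∃ f : ℕ → ℕ, Computable f ∧ ∀ m n, E m n ↔ F (f m) (f n)

/-- The computable FS-jump of `E`: `e E⁺ e'` iff the set of `E`-classes of elements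
of `ran φ_e` equals the set of `E`-classes of elements of `ran φ_{e'}`. -/
def FSJump (E : ℕ → ℕ → Prop) : ℕ → ℕ → Prop :=
  fun e e' => classOf E '' (phi e).ran = classOf E '' (phi e').ran

/-- `e ⊆_E e'`: every element of `ran φ_e` is `E`-equivalent to some element
of `ran φ_{e'}`. -/
def subE (E : ℕ → ℕ → Prop) (e e' : ℕ) : Prop :=
  ∀ k ∈ (phi e).ran, ∃ m ∈ (phi e').ran, E k m

/-- The product `E × id`, with `ℕ × ℕ` identified with ℕ via the pairing bijection. -/
def prodId (E : ℕ → ℕ → Prop) : ℕ → ℕ → Prop :=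
  fun a b => E (Nat.unpair a).1 (Nat.unpair b).1 ∧ (Nat.unpair a).2 = (Nat.unpair b).2

/-- Coding of triples: `⟨p,q,n⟩`. -/
def tripleCode (p q n : ℕ) : ℕ := Nat.pair p (Nat.pair q n)

/-!
The superset operation reverses inclusion: if `S a` enumerates, up to `E⁺`, all c.e. sets containing
the `a`-th one, then `S a ⊆_{E⁺} S b ↔ b ⊆_E a`. More generally, if `s` and `t` enumerate the
supersets of members of families `a` and `b`, then `s ⊆_{E⁺} t ↔ ∀ i, ∃ j, b j ⊆_E a i`. Using the
operation twice, inclusion modulo `E⁺⁺` expresses `∀ i, ∃ j, a i ⊆_E b j` for any two uniformly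
computable families.

Compare `(p, q) ↦ h ⟨p, q, n⟩ × {p}` with `p ↦ e₀ × {p}`, where `E × id ≤ E` allows a set to be
tagged by `p`. Since `h m ⊆_E e₀`, the first family always lies below the second, and the converse
says that every `p` has some `q` with `e₀ ⊆_E h ⟨p, q, n⟩`, that is, with `Q ⟨p, q, n⟩`.
-/

section Index

variable {α β : Type*} [Primcodable α] [Primcodable β]

theorem partrec₂_phi : Partrec₂ phi :=
  Nat.Partrec.Code.eval_part.comp
    ((Computable.ofNat Nat.Partrec.Code).comp Computable.fst) Computable.snd

theorem exists_computable_ran_phi_eq {f : α → β →. ℕ} (hf : Partrec₂ f) :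
    ∃ s : α → ℕ, Computable s ∧ ∀ x, (phi (s x)).ran = (f x).ran := by
  obtain ⟨c, eval_c⟩ := Nat.Partrec.Code.exists_code.1 hf
  refine ⟨fun x => Encodable.encode (c.curry (Encodable.encode x)), ?_, fun x => ?_⟩
  · exact Computable.encode.comp
      (Nat.Partrec.Code.primrec₂_curry.to_comp.comp (Computable.const c) Computable.encode)
  · have mem_phi (y k : ℕ) : k ∈ phi (Encodable.encode (c.curry (Encodable.encode x))) y ↔
        ∃ b : β, Encodable.decode y = some b ∧ k ∈ f x b := by
      simp [phi, Nat.Partrec.Code.eval_curry, eval_c]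
    ext k
    constructor
    · rintro ⟨y, hy⟩
      obtain ⟨b, -, hb⟩ := (mem_phi y k).1 hy
      exact ⟨b, hb⟩
    · rintro ⟨b, hb⟩
      exact ⟨Encodable.encode b, (mem_phi _ k).2 ⟨b, Encodable.encodek b, hb⟩⟩

theorem exists_computable_ran_phi_eq_range {F : α → β → ℕ} (hF : Computable₂ F) :
    ∃ s : α → ℕ, Computable s ∧ ∀ x, (phi (s x)).ran = Set.range (F x) := by
  obtain ⟨s, hs, ran_s⟩ := exists_computable_ran_phi_eq hF.partrec₂
  refine ⟨s, hs, fun x => (ran_s x).trans ?_⟩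
  ext k
  simp [PFun.ran, eq_comm]

theorem exists_computable₂_ran_phi_eq_union :
    ∃ U : ℕ → ℕ → ℕ, Computable₂ U ∧
      ∀ a b, (phi (U a b)).ran = (phi a).ran ∪ (phi b).ran := by
  have hf : Partrec₂ fun (ab : ℕ × ℕ) (iy : Bool × ℕ) => phi (cond iy.1 ab.1 ab.2) iy.2 :=
    partrec₂_phi.comp
      (Computable.cond (Computable.fst.comp Computable.snd)
        (Computable.fst.comp Computable.fst) (Computable.snd.comp Computable.fst))
      (Computable.snd.comp Computable.snd)
  obtain ⟨s, hs, ran_s⟩ := exists_computable_ran_phi_eq hf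
  refine ⟨fun a b => s (a, b), hs, fun a b => (ran_s (a, b)).trans ?_⟩
  ext k
  simp [PFun.ran, or_comm]

theorem exists_computable₂_ran_phi_eq_image {F : α → ℕ → ℕ} (hF : Computable₂ F) :
    ∃ J : ℕ → α → ℕ, Computable₂ J ∧ ∀ e x, (phi (J e x)).ran = F x '' (phi e).ran := by
  have hf : Partrec₂ fun (ex : ℕ × α) (y : ℕ) => (phi ex.1 y).map (F ex.2) :=
    (partrec₂_phi.comp (Computable.fst.comp Computable.fst) Computable.snd).map
      (hF.comp (Computable.snd.comp (Computable.fst.comp Computable.fst)) Computable.snd)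
  obtain ⟨s, hs, ran_s⟩ := exists_computable_ran_phi_eq hf
  refine ⟨fun e x => s (e, x), hs, fun e x => (ran_s (e, x)).trans ?_⟩
  ext k
  constructor
  · rintro ⟨y, hk⟩
    obtain ⟨m, hm, rfl⟩ := (Part.mem_map_iff _).1 hk
    exact ⟨m, ⟨y, hm⟩, rfl⟩
  · rintro ⟨m, ⟨y, hm⟩, rfl⟩
    exact ⟨y, Part.mem_map _ hm⟩

end Index

section Jump

variable {E : ℕ → ℕ → Prop} {a b c d : ℕ}

theorem classOf_eq_classOf_iff (hE : Equivalence E) : classOf E a = classOf E b ↔ E a b := by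
  constructor
  · intro hab
    have hb : b ∈ classOf E b := hE.refl b
    rwa [← hab] at hb
  · intro hab
    ext x
    exact ⟨hE.trans (hE.symm hab), hE.trans hab⟩

theorem subE_iff_image_classOf_subset (hE : Equivalence E) :
    subE E a b ↔ classOf E '' (phi a).ran ⊆ classOf E '' (phi b).ran := by
  rw [Set.image_subset_iff]
  refine forall₂_congr fun k _ => exists_congr fun m => and_congr_right fun _ => ?_
  rw [classOf_eq_classOf_iff hE]
  exact ⟨hE.symm, hE.symm⟩

theorem subE_refl (hE : Equivalence E) (a : ℕ) : subE E a a :=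
  fun k hk => ⟨k, hk, hE.refl k⟩

theorem subE_trans (hE : Equivalence E) (hab : subE E a b) (hbc : subE E b c) : subE E a c := by
  rw [subE_iff_image_classOf_subset hE] at *
  exact hab.trans hbc

theorem subE_iff_of_ran_eq_union (hc : (phi c).ran = (phi a).ran ∪ (phi b).ran) :
    subE E c d ↔ subE E a d ∧ subE E b d := by
  simp only [subE, hc, Set.mem_union, or_imp, forall_and]

theorem fsJump_iff_subE_and_subE (hE : Equivalence E) :
    FSJump E a b ↔ subE E a b ∧ subE E b a := by
  rw [subE_iff_image_classOf_subset hE, subE_iff_image_classOf_subset hE]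
  exact Set.Subset.antisymm_iff

theorem equivalence_fsJump (E : ℕ → ℕ → Prop) : Equivalence (FSJump E) :=
  ⟨fun _ => rfl, Eq.symm, Eq.trans⟩

end Jump

/-- `φ_t` enumerates, up to `E⁺`, exactly the indices `b` whose c.e. set includes, modulo `E`,
some member of the family `a`. The `E⁺`-saturation of `ran φ_t` is specified instead of `ran φ_t`
itself, so that nothing depends on which indices of a superset are listed. -/
def EnumeratesSupersets {ι : Type*} (E : ℕ → ℕ → Prop) (a : ι → ℕ) (t : ℕ) : Prop :=
  ∀ b, (∃ k ∈ (phi t).ran, FSJump E b k) ↔ ∃ i, subE E (a i) b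

section Supersets

variable {E : ℕ → ℕ → Prop} {α β ι κ : Type*}

theorem EnumeratesSupersets.subE_fsJump_iff (hE : Equivalence E) {a : ι → ℕ} {b : κ → ℕ}
    {s t : ℕ} (hs : EnumeratesSupersets E a s) (ht : EnumeratesSupersets E b t) :
    subE (FSJump E) s t ↔ ∀ i, ∃ j, subE E (b j) (a i) := by
  have hE₁ := equivalence_fsJump E
  constructor
  · intro hst i
    obtain ⟨k, hk, a_k⟩ := (hs (a i)).2 ⟨i, subE_refl hE (a i)⟩
    obtain ⟨m, hm, k_m⟩ := hst k hk
    exact (ht (a i)).1 ⟨m, hm, hE₁.trans a_k k_m⟩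
  · intro hba k hk
    obtain ⟨i, a_sub_k⟩ := (hs k).1 ⟨k, hk, hE₁.refl k⟩
    obtain ⟨j, b_sub_a⟩ := hba i
    exact (ht k).2 ⟨j, subE_trans hE b_sub_a a_sub_k⟩

variable [Primcodable α] [Primcodable β] [Primcodable ι] [Primcodable κ]

theorem exists_enumeratesSupersets (hE : Equivalence E) {a : α → ι → ℕ} (ha : Computable₂ a) :
    ∃ t : α → ℕ, Computable t ∧ ∀ x, EnumeratesSupersets E (a x) (t x) := by
  obtain ⟨U, hU, ran_U⟩ := exists_computable₂_ran_phi_eq_union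
  have subE_U_iff (v e d : ℕ) : subE E (U v e) d ↔ subE E v d ∧ subE E e d :=
    subE_iff_of_ran_eq_union (ran_U v e)
  obtain ⟨t, ht, ran_t⟩ := exists_computable_ran_phi_eq_range
    (F := fun x (vi : ℕ × ι) => U vi.1 (a x vi.2))
    (hU.comp (Computable.fst.comp Computable.snd)
      (ha.comp Computable.fst (Computable.snd.comp Computable.snd)))
  refine ⟨t, ht, fun x b => ?_⟩
  simp only [ran_t, Set.exists_range_iff, fsJump_iff_subE_and_subE hE]
  constructor
  · rintro ⟨⟨v, i⟩, -, U_sub_b⟩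
    exact ⟨i, ((subE_U_iff _ _ _).1 U_sub_b).2⟩
  · rintro ⟨i, a_sub_b⟩
    exact ⟨(b, i), ((subE_U_iff _ _ _).1 (subE_refl hE _)).1,
      (subE_U_iff _ _ _).2 ⟨subE_refl hE b, a_sub_b⟩⟩

theorem exists_computable_subE_fsJump_iff_swap (hE : Equivalence E) :
    ∃ S : ℕ → ℕ, Computable S ∧ ∀ a b, subE (FSJump E) (S a) (S b) ↔ subE E b a := by
  obtain ⟨S, hS, S_supersets⟩ := exists_enumeratesSupersets hE
    (a := fun (e : ℕ) (_ : Unit) => e) Computable.fst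
  refine ⟨S, hS, fun a b => ?_⟩
  simpa using (S_supersets a).subE_fsJump_iff hE (S_supersets b)

theorem exists_computable_subE_fsJump_fsJump_iff (hE : Equivalence E)
    {a : α → ι → ℕ} {b : β → κ → ℕ} (ha : Computable₂ a) (hb : Computable₂ b) :
    ∃ (s : α → ℕ) (t : β → ℕ), Computable s ∧ Computable t ∧ ∀ x y,
      (subE (FSJump (FSJump E)) (s x) (t y) ↔ ∀ i, ∃ j, subE E (a x i) (b y j)) ∧
      (subE (FSJump (FSJump E)) (t y) (s x) ↔ ∀ j, ∃ i, subE E (b y j) (a x i)) := by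
  have hE₁ := equivalence_fsJump E
  obtain ⟨S, hS, subE_S_iff⟩ := exists_computable_subE_fsJump_iff_swap hE
  obtain ⟨s, hs, s_supersets⟩ := exists_enumeratesSupersets hE₁ (hS.comp₂ ha)
  obtain ⟨t, ht, t_supersets⟩ := exists_enumeratesSupersets hE₁ (hS.comp₂ hb)
  refine ⟨s, t, hs, ht, fun x y => ⟨?_, ?_⟩⟩
  · simpa only [subE_S_iff] using (s_supersets x).subE_fsJump_iff hE₁ (t_supersets y)
  · simpa only [subE_S_iff] using (t_supersets y).subE_fsJump_iff hE₁ (s_supersets x)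

end Supersets

theorem computable_tripleCode {α : Type*} [Primcodable α] {p q n : α → ℕ}
    (hp : Computable p) (hq : Computable q) (hn : Computable n) :
    Computable fun x => tripleCode (p x) (q x) (n x) :=
  Primrec₂.natPair.to_comp.comp hp (Primrec₂.natPair.to_comp.comp hq hn)

theorem exists_computable₂_subE_tag_iff {E : ℕ → ℕ → Prop} (hprod : Reduces (prodId E) E) :
    ∃ tag : ℕ → ℕ → ℕ, Computable₂ tag ∧ ∀ a b p q,
      subE E (tag a p) (tag b q) ↔ (phi a).ran = ∅ ∨ p = q ∧ subE E a b := by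
  obtain ⟨r, hr, prodId_iff⟩ := hprod
  have r_iff (x y p q : ℕ) : E (r (Nat.pair x p)) (r (Nat.pair y q)) ↔ E x y ∧ p = q := by
    simp [← prodId_iff, prodId]
  obtain ⟨tag, htag, ran_tag⟩ := exists_computable₂_ran_phi_eq_image
    (F := fun p x => r (Nat.pair x p))
    (hr.comp (Primrec₂.natPair.to_comp.comp Computable.snd Computable.fst))
  refine ⟨tag, htag, fun a b p q => ?_⟩
  have subE_tag_iff : subE E (tag a p) (tag b q) ↔
      ∀ x ∈ (phi a).ran, (∃ y ∈ (phi b).ran, E x y) ∧ p = q := by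
    simp only [subE, ran_tag, Set.forall_mem_image, Set.exists_mem_image, r_iff, ← and_assoc,
      exists_and_right]
  rw [subE_tag_iff]
  obtain hempty | ⟨x, hx⟩ := (phi a).ran.eq_empty_or_nonempty
  · simp [hempty]
  · have ran_ne_empty : (phi a).ran ≠ ∅ := Set.Nonempty.ne_empty ⟨x, hx⟩
    simp only [ran_ne_empty, false_or]
    exact ⟨fun hall => ⟨(hall x hx).2, fun y hy => (hall y hy).1⟩,
      fun ⟨hpq, hab⟩ y hy => ⟨hab y hy, hpq⟩⟩

/-- Absorbing a `∀∃` quantifier pair with three jumps: if `E × id ≤ E` and `Q` is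
reducible to `E⁺` via `h, e₀` with `h n ⊆_E e₀`, and `P n ⟺ ∀p ∃q Q(⟨p,q,n⟩)`, then
`P` is reducible to `E⁺⁺⁺` via some computable `g, f₀` with `g n ⊆_{E⁺⁺} f₀`. -/
theorem successor_step (E : ℕ → ℕ → Prop) (hE : Equivalence E)
    (hprod : Reduces (prodId E) E)
    (Q : Set ℕ) (e₀ : ℕ) (h : ℕ → ℕ) (hh : Computable h)
    (hQ : ∀ n, n ∈ Q ↔ FSJump E (h n) e₀) (hsub : ∀ n, subE E (h n) e₀)
    (P : Set ℕ) (hP : ∀ n, n ∈ P ↔ ∀ p, ∃ q, tripleCode p q n ∈ Q) :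
    ∃ f₀ : ℕ, ∃ g : ℕ → ℕ, Computable g ∧
      (∀ n, n ∈ P ↔ FSJump (FSJump (FSJump E)) (g n) f₀) ∧
      (∀ n, subE (FSJump (FSJump E)) (g n) f₀) := by
  obtain ⟨tag, htag, subE_tag_iff⟩ := exists_computable₂_subE_tag_iff hprod
  obtain ⟨g, f, hg, -, subE_iff⟩ := exists_computable_subE_fsJump_fsJump_iff hE
    (a := fun n (pq : ℕ × ℕ) => tag (h (tripleCode pq.1 pq.2 n)) pq.1)
    (b := fun (_ : Unit) p => tag e₀ p)
    (htag.comp (hh.comp (computable_tripleCode (Computable.fst.comp Computable.snd)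
      (Computable.snd.comp Computable.snd) Computable.fst)) (Computable.fst.comp Computable.snd))
    (htag.comp (Computable.const e₀) Computable.snd)
  have g_sub_f (n : ℕ) : subE (FSJump (FSJump E)) (g n) (f ()) :=
    (subE_iff n ()).1.2 fun pq => ⟨pq.1, (subE_tag_iff _ _ _ _).2 (.inr ⟨rfl, hsub _⟩)⟩
  have mem_Q_iff (m : ℕ) : m ∈ Q ↔ subE E e₀ (h m) := by
    simp only [hQ, fsJump_iff_subE_and_subE hE, hsub, true_and]
  refine ⟨f (), g, hg, fun n => ?_, g_sub_f⟩
  simp only [fsJump_iff_subE_and_subE (equivalence_fsJump _), g_sub_f, true_and, (subE_iff n ()).2,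
    subE_tag_iff, hP, mem_Q_iff]
  refine forall_congr' fun p => ⟨fun ⟨q, hq⟩ => ⟨(p, q), .inr ⟨rfl, hq⟩⟩, ?_⟩
  rintro ⟨⟨_, q⟩, hempty | ⟨rfl, hq⟩⟩
  · exact ⟨q, by simp [subE, hempty]⟩
  · exact ⟨q, hq⟩
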